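/- Let n ≥ 2 and let m = 2m₀+1 be odd with m₀ ≥ 1. Let H be a Hankel tensor of order m and dimension n with parameter vector h ∈ ℂ^{d+1}, d = (n−1)m, let s = ⌊d/2⌋, and let r = rank C_{d−s,s}(h). Suppose r ≤ 1 + (n−1)m₀ and there exists a nonzero f = (f_0,…,f_r) ∈ ker C_{d−r,r}(h) whose binary form f(x,y) = f_0 x^r + ⋯ + f_r y^r is squarefree as a homogeneous polynomial in ℂ[x,y]. Then rank_V(H) = rank_S(H) = rank(H) = brank_V(H) = brank_S(H) = brank(H) = r. -/

import Mathlib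

open scoped BigOperators
open MvPolynomial

noncomputable section

/-- An order-`m`, dimension-`n` complex tensor. -/
abbrev Tensor (m n : ℕ) := (Fin m → Fin n) → ℂ

/-- Tensors expressible as a sum of `r` rank-one tensors. -/
def cpSet (m n r : ℕ) : Set (Tensor m n) :=
  {T | ∃ u : Fin r → Fin m → Fin n → ℂ, ∀ i, T i = ∑ k, ∏ j, u k j (i j)}

/-- Tensors expressible as a sum of `r` symmetric rank-one tensors. -/
def symSet (m n r : ℕ) : Set (Tensor m n) :=
  {T | ∃ v : Fin r → Fin n → ℂ, ∀ i, T i = ∑ k, ∏ j, v k (i j)}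

/-- The Vandermonde vector `v(a,b) ∈ ℂ^n`, `v(a,b)_i = a^(n-1-i) * b^i`. -/
def vand (n : ℕ) (a b : ℂ) : Fin n → ℂ := fun i => a ^ (n - 1 - (i : ℕ)) * b ^ (i : ℕ)

/-- Tensors expressible as a sum of `r` Vandermonde rank-one tensors. -/
def vandSet (m n r : ℕ) : Set (Tensor m n) :=
  {T | ∃ ab : Fin r → ℂ × ℂ, ∀ i, T i = ∑ k, ∏ j, vand n (ab k).1 (ab k).2 (i j)}

/-- The cp rank of a tensor. -/
def cpRank {m n : ℕ} (T : Tensor m n) : ℕ := sInf {r | T ∈ cpSet m n r}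

/-- The symmetric rank of a tensor. -/
def symRank {m n : ℕ} (T : Tensor m n) : ℕ := sInf {r | T ∈ symSet m n r}

/-- The Vandermonde rank of a tensor. -/
def vandRank {m n : ℕ} (T : Tensor m n) : ℕ := sInf {r | T ∈ vandSet m n r}

/-- The border rank of a tensor (closure in the product topology). -/
def brank {m n : ℕ} (T : Tensor m n) : ℕ := sInf {r | T ∈ closure (cpSet m n r)}

/-- The symmetric border rank of a tensor. -/
def bSymRank {m n : ℕ} (T : Tensor m n) : ℕ := sInf {r | T ∈ closure (symSet m n r)}

/-- The border Vandermonde rank of a tensor. -/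
def bVandRank {m n : ℕ} (T : Tensor m n) : ℕ := sInf {r | T ∈ closure (vandSet m n r)}

/-- `T` is the Hankel tensor with parameter vector `h ∈ ℂ^{(n-1)m+1}`. -/
def IsHankel {m n : ℕ} (T : Tensor m n) (h : Fin ((n - 1) * m + 1) → ℂ) : Prop :=
  ∀ i : Fin m → Fin n, T i = h ⟨∑ j, (i j : ℕ), by
    have h1 : ∑ j, (i j : ℕ) ≤ ∑ _j : Fin m, (n - 1) :=
      Finset.sum_le_sum fun j _ => Nat.le_pred_of_lt (i j).isLt
    simp only [Finset.sum_const, Finset.card_univ, Fintype.card_fin, smul_eq_mul] at h1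
    exact Nat.lt_succ_of_le (h1.trans (le_of_eq (Nat.mul_comm m (n - 1))))⟩

/-- The `(d-r+1) × (r+1)` Hankel (catalecticant) matrix `C_{d-r,r}(h)` of `h ∈ ℂ^{d+1}`. -/
def hMat (d r : ℕ) (h : Fin (d + 1) → ℂ) : Matrix (Fin (d - r + 1)) (Fin (r + 1)) ℂ :=
  Matrix.of fun i j => if hij : (i : ℕ) + (j : ℕ) < d + 1 then h ⟨(i : ℕ) + (j : ℕ), hij⟩ else 0

/-- The binary form `f(x,y) = f_0 x^r + f_1 x^(r-1) y + ⋯ + f_r y^r`. -/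
def binForm (r : ℕ) (f : Fin (r + 1) → ℂ) : MvPolynomial (Fin 2) ℂ :=
  ∑ j : Fin (r + 1), C (f j) * X 0 ^ (r - (j : ℕ)) * X 1 ^ (j : ℕ)

/-- The binary form `h(x,y) = ∑_j binom(d,j) h_j x^j y^(d-j)` associated with `h ∈ ℂ^{d+1}`. -/
def assocForm (d : ℕ) (h : Fin (d + 1) → ℂ) : MvPolynomial (Fin 2) ℂ :=
  ∑ j : Fin (d + 1), C ((d.choose (j : ℕ) : ℂ) * h j) * X 0 ^ (j : ℕ) * X 1 ^ (d - (j : ℕ))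

/-- Parameter vectors of binary forms of Waring rank at most `r`. -/
def waringSet (d r : ℕ) : Set (Fin (d + 1) → ℂ) :=
  {h | ∃ ab : Fin r → ℂ × ℂ,
    assocForm d h = ∑ i, (C (ab i).1 * X 0 + C (ab i).2 * X 1) ^ d}

/-- The Waring rank of the binary form associated with `h`. -/
def waringRank (d : ℕ) (h : Fin (d + 1) → ℂ) : ℕ := sInf {r | h ∈ waringSet d r}

/-- The border Waring rank of the binary form associated with `h`. -/
def bWaringRank (d : ℕ) (h : Fin (d + 1) → ℂ) : ℕ := sInf {r | h ∈ closure (waringSet d r)}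

/-- A binary form is the homogenization of its dehomogenization at `X 1 = 1`. -/
lemma binForm_eq_homogenize (r : ℕ) (f : Fin (r + 1) → ℂ) :
    binForm r f =
      (∑ j : Fin (r + 1), Polynomial.monomial (r - (j : ℕ)) (f j)).homogenize r := by
  rw [Polynomial.homogenize_finsetSum]
  refine Finset.sum_congr rfl fun j _ => ?_
  rw [← Polynomial.C_mul_X_pow_eq_monomial, Polynomial.homogenize_C_mul,
    Polynomial.homogenize_X_pow (Nat.sub_le _ _), Nat.sub_sub_self (Nat.le_of_lt_succ j.isLt),
    mul_assoc]

/-- A polynomial is squarefree as soon as some homogenization of it is. -/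
lemma squarefree_of_squarefree_homogenize {P : Polynomial ℂ} {r : ℕ} (hP : P.natDegree ≤ r)
    (hsf : Squarefree (P.homogenize r)) : Squarefree P := by
  have hP0 : P ≠ 0 := by
    rintro rfl
    simp at hsf
  rintro q ⟨g, rfl⟩
  have hq : q ≠ 0 := by
    rintro rfl
    simp at hP0
  have hg : g ≠ 0 := by
    rintro rfl
    simp at hP0
  rw [Polynomial.natDegree_mul (mul_ne_zero hq hq) hg, Polynomial.natDegree_mul hq hq] at hP
  obtain ⟨t, rfl⟩ := Nat.exists_eq_add_of_le hP
  rw [add_assoc, Polynomial.homogenize_mul _ _ Polynomial.natDegree_mul_le (Nat.le_add_right _ _),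
    Polynomial.homogenize_mul _ _ le_rfl le_rfl] at hsf
  have hu := (hsf _ ⟨_, rfl⟩).map (MvPolynomial.aeval ![(Polynomial.X : Polynomial ℂ), 1])
  rwa [Polynomial.aeval_homogenize_X_one _ le_rfl] at hu

/-- A squarefree homogenization in degree `r` loses at most one degree. -/
lemma le_natDegree_succ_of_squarefree_homogenize {P : Polynomial ℂ} {r : ℕ}
    (hsf : Squarefree (P.homogenize r)) : r ≤ P.natDegree + 1 := by
  by_contra! hlt
  obtain ⟨t, rfl⟩ : ∃ t, r = t + (1 + 1) := ⟨r - 2, by omega⟩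
  have hfac : P.homogenize (t + (1 + 1)) = P.homogenize t * (X 1 * X 1) := by
    have h1 := Polynomial.homogenize_mul P 1 (m := t) (n := 1 + 1) (by omega) (by simp)
    rw [mul_one, Polynomial.homogenize_one] at h1
    rw [h1, pow_two]
  rw [hfac] at hsf
  exact (MvPolynomial.X_prime (R := ℂ) (i := (1 : Fin 2))).not_isUnit (hsf _ ⟨_, mul_comm _ _⟩)

/-- A squarefree binary form of degree `r` has `r` pairwise distinct projective roots. -/
lemma exists_roots_of_squarefree_binForm {r : ℕ} {f : Fin (r + 1) → ℂ}
    (hsf : Squarefree (binForm r f)) :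
    ∃ p : Fin r → ℂ × ℂ, (∀ k, p k ≠ 0) ∧
      (∀ k l, k ≠ l → (p k).1 * (p l).2 - (p l).1 * (p k).2 ≠ 0) ∧
      ∀ k, MvPolynomial.eval ![(p k).1, (p k).2] (binForm r f) = 0 := by
  classical
  rw [binForm_eq_homogenize] at hsf ⊢
  set P : Polynomial ℂ := ∑ j : Fin (r + 1), Polynomial.monomial (r - (j : ℕ)) (f j)
  have hdeg : P.natDegree ≤ r :=
    Polynomial.natDegree_sum_le_of_forall_le _ _ fun j _ =>
      (Polynomial.natDegree_monomial_le _).trans (Nat.sub_le _ _)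
  have hPsf := squarefree_of_squarefree_homogenize hdeg hsf
  have hle := le_natDegree_succ_of_squarefree_homogenize hsf
  have hcard : P.roots.toFinset.card = P.natDegree := by
    rw [Multiset.toFinset_card_of_nodup
      (Polynomial.nodup_roots (PerfectField.separable_iff_squarefree.mpr hPsf))]
    exact (Polynomial.splits_iff_card_roots.mp (IsAlgClosed.splits P))
  suffices hS : ∃ S : Finset (ℂ × ℂ), S.card = r ∧ (∀ x ∈ S, x ≠ 0) ∧
      (∀ x ∈ S, ∀ y ∈ S, x ≠ y → x.1 * y.2 - y.1 * x.2 ≠ 0) ∧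
      ∀ x ∈ S, MvPolynomial.eval ![x.1, x.2] (P.homogenize r) = 0 by
    obtain ⟨S, hSr, hne, hpair, hev⟩ := hS
    let e := (S.equivFinOfCardEq hSr).symm
    exact ⟨fun k => e k, fun k => hne _ (e k).2, fun k l hkl => hpair _ (e k).2 _ (e l).2
      fun h => hkl (e.injective (Subtype.ext h)), fun k => hev _ (e k).2⟩
  have hroot : ∀ a ∈ P.roots.toFinset,
      MvPolynomial.eval ![a, 1] (P.homogenize r) = 0 := by
    intro a ha
    have h1 := Polynomial.aeval_homogenize_of_eq_one hdeg ![a, 1] (by simp)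
    rw [MvPolynomial.aeval_eq_eval] at h1
    rw [Multiset.mem_toFinset, Polynomial.mem_roots'] at ha
    simpa [ha.2.eq_zero] using h1
  have hinj : Function.Injective fun a : ℂ => (a, (1 : ℂ)) := fun a b h => (Prod.ext_iff.mp h).1
  rcases hdeg.eq_or_lt with heq | hlt
  · refine ⟨P.roots.toFinset.image fun a => (a, 1), ?_, ?_, ?_, ?_⟩
    · rw [Finset.card_image_of_injective _ hinj, hcard, heq]
    · simp only [Finset.mem_image]
      rintro _ ⟨a, -, rfl⟩
      simp
    · simp only [Finset.mem_image]
      rintro _ ⟨a, -, rfl⟩ _ ⟨b, -, rfl⟩ hab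
      simpa [sub_eq_zero] using hab
    · simp only [Finset.mem_image]
      rintro _ ⟨a, ha, rfl⟩
      exact hroot a ha
  · refine ⟨insert (1, 0) (P.roots.toFinset.image fun a => (a, 1)), ?_, ?_, ?_, ?_⟩
    · rw [Finset.card_insert_of_notMem (by simp), Finset.card_image_of_injective _ hinj, hcard]
      omega
    · simp only [Finset.mem_image, Finset.mem_insert]
      rintro _ (rfl | ⟨a, -, rfl⟩) <;> simp
    · simp only [Finset.mem_image, Finset.mem_insert]
      rintro _ (rfl | ⟨a, -, rfl⟩) _ (rfl | ⟨b, -, rfl⟩) hab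
      · simp at hab
      · simp
      · simp
      · simpa [sub_eq_zero] using hab
    · simp only [Finset.mem_image, Finset.mem_insert]
      rintro _ (rfl | ⟨a, ha, rfl⟩)
      · obtain ⟨t, rfl⟩ : ∃ t, r = t + 1 := ⟨r - 1, by omega⟩
        have h1 := Polynomial.homogenize_mul P 1 (m := t) (n := 1) (by omega) (by simp)
        rw [mul_one, Polynomial.homogenize_one] at h1
        simp [h1]
      · exact hroot a ha

/-- Vandermonde vectors of pairwise distinct projective points are linearly independent. -/
lemma linearIndependent_vand {r q : ℕ} (hrq : r ≤ q) {p : Fin r → ℂ × ℂ} (hne : ∀ k, p k ≠ 0)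
    (hp : ∀ k l, k ≠ l → (p k).1 * (p l).2 - (p l).1 * (p k).2 ≠ 0) :
    LinearIndependent ℂ fun k => vand q (p k).1 (p k).2 := by
  have hdet : (Matrix.projVandermonde (fun k => (p k).2) (fun k => (p k).1)).det ≠ 0 := by
    rw [Matrix.det_projVandermonde]
    refine Finset.prod_ne_zero_iff.mpr fun k _ => Finset.prod_ne_zero_iff.mpr fun l hl => ?_
    have := hp k l (Finset.mem_Ioi.mp hl).ne
    contrapose! this
    linear_combination this
  rw [Fintype.linearIndependent_iff]
  intro c hc k
  have hci : ∀ i (hi : i < q), ∑ l, c l * ((p l).1 ^ (q - 1 - i) * (p l).2 ^ i) = 0 := by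
    intro i hi
    simpa [vand] using congrFun hc ⟨i, hi⟩
  by_cases hk : (p k).1 = 0
  · have hk2 : (p k).2 ≠ 0 := fun h0 => hne k (Prod.ext hk h0)
    have hv : Matrix.vecMul (fun l => c l * (p l).2 ^ (q - r))
        (Matrix.projVandermonde (fun k => (p k).2) (fun k => (p k).1)) = 0 := by
      ext i
      have hi := i.isLt
      have := hci (q - r + i) (by omega)
      rw [show q - 1 - (q - r + (i : ℕ)) = r - (i + 1) by omega] at this
      rw [Pi.zero_apply, ← this, Matrix.vecMul, dotProduct]
      refine Finset.sum_congr rfl fun l _ => ?_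
      rw [Matrix.projVandermonde_apply, Fin.val_rev, pow_add]
      ring
    have := congrFun (Matrix.eq_zero_of_vecMul_eq_zero hdet hv) k
    simpa [hk2] using this
  · have hv : Matrix.vecMul (fun l => c l * (p l).1 ^ (q - r))
        (Matrix.projVandermonde (fun k => (p k).2) (fun k => (p k).1)) = 0 := by
      ext i
      have hi := i.isLt
      have := hci i (by omega)
      rw [show q - 1 - (i : ℕ) = (q - r) + (r - (i + 1)) by omega] at this
      rw [Pi.zero_apply, ← this, Matrix.vecMul, dotProduct]
      refine Finset.sum_congr rfl fun l _ => ?_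
      rw [Matrix.projVandermonde_apply, Fin.val_rev, pow_add]
      ring
    have := congrFun (Matrix.eq_zero_of_vecMul_eq_zero hdet hv) k
    simpa [hk] using this

/-- A matrix with linearly independent rows has a right inverse. -/
lemma exists_right_inverse_of_linearIndependent {ι : Type*} [Fintype ι] {r : ℕ}
    {v : Fin r → ι → ℂ} (hv : LinearIndependent ℂ v) :
    ∃ R : Matrix ι (Fin r) ℂ, Matrix.of v * R = 1 := by
  rw [← Matrix.mulVec_surjective_iff_exists_right_inverse]
  have hrank : (Matrix.of v).rank = Fintype.card (Fin r) := LinearIndependent.rank_matrix hv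
  have htop : LinearMap.range (Matrix.of v).mulVecLin = ⊤ := by
    apply Submodule.eq_top_of_finrank_eq
    rw [Module.finrank_fintype_fun_eq_card, ← hrank, Matrix.rank]
  exact LinearMap.range_eq_top.mp htop

lemma hMat_apply {d r : ℕ} (hrd : r ≤ d) (h : Fin (d + 1) → ℂ) (i : Fin (d - r + 1))
    (j : Fin (r + 1)) : hMat d r h i j = h ⟨i + j, by omega⟩ := by
  have hij : (i : ℕ) + (j : ℕ) < d + 1 := by omega
  rw [hMat, Matrix.of_apply, dif_pos hij]

/-- The linear map `h ↦ C_{d-r,r}(h) f`. -/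
def hMatMulVec (d r : ℕ) (f : Fin (r + 1) → ℂ) :
    (Fin (d + 1) → ℂ) →ₗ[ℂ] (Fin (d - r + 1) → ℂ) where
  toFun h := (hMat d r h).mulVec f
  map_add' g h := by
    rw [← Matrix.add_mulVec]
    congr 1
    ext i j
    simp only [hMat, Matrix.of_apply, Matrix.add_apply]
    split_ifs <;> simp
  map_smul' c h := by
    rw [RingHom.id_apply, ← Matrix.smul_mulVec]
    congr 1
    ext i j
    simp only [hMat, Matrix.of_apply, Matrix.smul_apply]
    split_ifs <;> simp

lemma hMatMulVec_apply {d r : ℕ} (hrd : r ≤ d) (f : Fin (r + 1) → ℂ) (h : Fin (d + 1) → ℂ)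
    (i : Fin (d - r + 1)) :
    hMatMulVec d r f h i = ∑ j : Fin (r + 1), h ⟨i + j, by omega⟩ * f j := by
  change (hMat d r h).mulVec f i = _
  rw [Matrix.mulVec, dotProduct]
  refine Finset.sum_congr rfl fun j _ => ?_
  rw [hMat_apply hrd]

/-- Vandermonde vectors at the roots of a binary form are annihilated by the form. -/
lemma hMatMulVec_vand {d r : ℕ} (hrd : r ≤ d) (f : Fin (r + 1) → ℂ) {a b : ℂ}
    (hab : MvPolynomial.eval ![a, b] (binForm r f) = 0) :
    hMatMulVec d r f (vand (d + 1) a b) = 0 := by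
  ext i
  have hi := i.isLt
  have hev : ∑ j : Fin (r + 1), f j * a ^ (r - (j : ℕ)) * b ^ (j : ℕ) = 0 := by
    simpa [binForm] using hab
  rw [hMatMulVec_apply hrd, Pi.zero_apply,
    ← mul_zero (a ^ (d - r - (i : ℕ)) * b ^ (i : ℕ)), ← hev, Finset.mul_sum]
  refine Finset.sum_congr rfl fun j _ => ?_
  have hj := j.isLt
  simp only [vand]
  rw [show d + 1 - 1 - ((i : ℕ) + j) = (d - r - i) + (r - j) by omega, pow_add, pow_add]
  ring

/-- An element of the kernel of `h ↦ C_{d-r,r}(h) f` is determined by `r` of its coordinates. -/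
lemma exists_coords_hMatMulVec_ker {d r : ℕ} (hrd : r ≤ d) {f : Fin (r + 1) → ℂ} (hf : f ≠ 0) :
    ∃ e : Fin r → Fin (d + 1), ∀ g, hMatMulVec d r f g = 0 → (∀ t, g (e t) = 0) → g = 0 := by
  obtain ⟨j₁, hj₁, hmax⟩ : ∃ j₁, f j₁ ≠ 0 ∧ ∀ j, j₁ < j → f j = 0 := by
    obtain ⟨j₀, hj₀⟩ := Function.ne_iff.mp hf
    obtain ⟨j, hj⟩ := (Set.toFinite {j | f j ≠ 0}).exists_maximal ⟨j₀, hj₀⟩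
    refine ⟨j, hj.prop, fun k hk => ?_⟩
    by_contra hne
    exact absurd hk (not_lt.mpr (hj.le_of_ge hne hk.le))
  have hj₁r := j₁.isLt
  refine ⟨fun t => ⟨if (t : ℕ) < j₁ then t else t + (d - r + 1), ?_⟩, fun g hg hz => ?_⟩
  · have := t.isLt
    split_ifs <;> omega
  suffices hall : ∀ l (hl : l < d + 1), g ⟨l, hl⟩ = 0 from funext fun l => hall l l.isLt
  intro l
  induction l using Nat.strong_induction_on with
  | _ l ih =>
    intro hl
    rcases lt_or_ge l j₁ with hlt | hge
    · simpa [hlt] using hz ⟨l, by omega⟩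
    rcases lt_or_ge (d - r + j₁) l with hgt | hle
    · have := hz ⟨l - (d - r + 1), by omega⟩
      convert this using 3
      rw [if_neg (by simp only; omega)]
      simp only
      omega
    have hrec := congrFun hg ⟨l - j₁, by omega⟩
    rw [hMatMulVec_apply hrd, Finset.sum_eq_single j₁] at hrec
    · simp only [Nat.sub_add_cancel hge, Pi.zero_apply, mul_eq_zero, hj₁, or_false] at hrec
      exact hrec
    · intro j _ hj
      rcases lt_or_gt_of_ne hj with hj | hj
      · have : (j : ℕ) < j₁ := hj
        rw [ih (l - j₁ + j) (by omega), zero_mul]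
      · rw [hmax j hj, mul_zero]
    · simp

/-- Sylvester's theorem: if `C_{d-r,r}(h) f = 0` and `f` vanishes at `r` distinct projective points,
then `h` is a combination of the Vandermonde vectors of these points. -/
lemma exists_eq_sum_vand {d r : ℕ} (hrd : r ≤ d) {f : Fin (r + 1) → ℂ} (hf : f ≠ 0)
    {p : Fin r → ℂ × ℂ} (hne : ∀ k, p k ≠ 0)
    (hp : ∀ k l, k ≠ l → (p k).1 * (p l).2 - (p l).1 * (p k).2 ≠ 0)
    (hev : ∀ k, MvPolynomial.eval ![(p k).1, (p k).2] (binForm r f) = 0)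
    {h : Fin (d + 1) → ℂ} (hker : (hMat d r h).mulVec f = 0) :
    ∃ c : Fin r → ℂ, h = ∑ k, c k • vand (d + 1) (p k).1 (p k).2 := by
  obtain ⟨e, he⟩ := exists_coords_hMatMulVec_ker hrd hf
  have hzero : ∀ c : Fin r → ℂ,
      hMatMulVec d r f (∑ k, c k • vand (d + 1) (p k).1 (p k).2) = 0 := fun c => by
    simp [hMatMulVec_vand hrd f (hev _)]
  have hli : LinearIndependent ℂ fun k t => vand (d + 1) (p k).1 (p k).2 (e t) := by
    rw [Fintype.linearIndependent_iff]
    intro c hc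
    refine Fintype.linearIndependent_iff.mp (linearIndependent_vand (by omega) hne hp) c
      (he _ (hzero c) fun t => ?_)
    simpa using congrFun hc t
  have hspan := hli.span_eq_top_of_card_eq_finrank' (by simp)
  obtain ⟨c, hc⟩ := (Submodule.mem_span_range_iff_exists_fun ℂ).mp
    (hspan ▸ Submodule.mem_top : (fun t => h (e t)) ∈ _)
  refine ⟨c, sub_eq_zero.mp (he _ ?_ fun t => ?_)⟩
  · rw [map_sub, hzero, sub_zero]
    exact hker
  · have := congrFun hc t
    simp only [Finset.sum_apply, Pi.smul_apply] at this
    rw [Pi.sub_apply, Finset.sum_apply, ← this, sub_eq_zero]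
    rfl

/-- If the catalecticant of a combination of `r` Vandermonde vectors has rank `r`, then all
coefficients are nonzero. -/
lemma coeff_ne_zero_of_rank_hMat {d s r : ℕ} (hsd : s ≤ d) {p : Fin r → ℂ × ℂ} {c : Fin r → ℂ}
    (hr : r ≤ (hMat d s (∑ k, c k • vand (d + 1) (p k).1 (p k).2)).rank) (k : Fin r) :
    c k ≠ 0 := by
  classical
  have hfac : hMat d s (∑ k, c k • vand (d + 1) (p k).1 (p k).2) =
      (Matrix.of fun k => vand (d - s + 1) (p k).1 (p k).2).transpose * Matrix.diagonal c *
        Matrix.of fun k => vand (s + 1) (p k).1 (p k).2 := by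
    ext i j
    have hi := i.isLt
    have hj := j.isLt
    rw [hMat_apply hsd, Matrix.mul_apply, Finset.sum_apply]
    refine Finset.sum_congr rfl fun k _ => ?_
    simp only [Matrix.mul_diagonal, Matrix.transpose_apply, Matrix.of_apply, vand, Pi.smul_apply,
      smul_eq_mul]
    rw [show d + 1 - 1 - ((i : ℕ) + j) = (d - s + 1 - 1 - i) + (s + 1 - 1 - j) by omega,
      pow_add, pow_add]
    ring
  rw [hfac] at hr
  have hle := hr.trans ((Matrix.rank_mul_le_left _ _).trans (Matrix.rank_mul_le_right _ _))
  rw [Matrix.rank_diagonal, Fintype.card_subtype] at hle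
  have huniv : Finset.univ.filter (fun k => c k ≠ 0) = Finset.univ :=
    Finset.eq_univ_of_card _ (le_antisymm (Finset.card_le_univ _) (by simpa using hle))
  have hk := Finset.mem_univ k
  rw [← huniv] at hk
  exact (Finset.mem_filter.mp hk).2

/-- The flattening of a tensor along a partition of its modes. -/
def flatten {m m₁ m₂ n : ℕ} (σ : Fin m₁ ⊕ Fin m₂ ≃ Fin m) (T : Tensor m n) :
    Matrix (Fin m₁ → Fin n) (Fin m₂ → Fin n) ℂ :=
  Matrix.of fun I J => T (Sum.elim I J ∘ σ.symm)

lemma prod_sumElim {m m₁ m₂ n : ℕ} (σ : Fin m₁ ⊕ Fin m₂ ≃ Fin m) (u : Fin m → Fin n → ℂ)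
    (I : Fin m₁ → Fin n) (J : Fin m₂ → Fin n) :
    ∏ j, u j ((Sum.elim I J ∘ σ.symm) j) =
      (∏ j, u (σ (Sum.inl j)) (I j)) * ∏ j, u (σ (Sum.inr j)) (J j) := by
  rw [← σ.prod_comp, Fintype.prod_sum_type]
  simp

lemma rank_flatten_le {m m₁ m₂ n q : ℕ} (σ : Fin m₁ ⊕ Fin m₂ ≃ Fin m) {T : Tensor m n}
    (hT : T ∈ cpSet m n q) : (flatten σ T).rank ≤ q := by
  obtain ⟨u, hu⟩ := hT
  have hfac : flatten σ T =
      (Matrix.of fun (I : Fin m₁ → Fin n) (k : Fin q) => ∏ j, u k (σ (Sum.inl j)) (I j)) *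
        Matrix.of fun (k : Fin q) (J : Fin m₂ → Fin n) => ∏ j, u k (σ (Sum.inr j)) (J j) := by
    ext I J
    simp only [flatten, Matrix.of_apply, Matrix.mul_apply, hu, prod_sumElim]
  rw [hfac]
  exact (Matrix.rank_mul_le_left _ _).trans 
    ((Matrix.rank_le_card_width _).trans_eq (Fintype.card_fin q))

/-- Border rank is bounded below by the size of a nonvanishing minor of a compressed flattening. -/
lemma le_of_mem_closure_cpSet {m m₁ m₂ n q r : ℕ} (σ : Fin m₁ ⊕ Fin m₂ ≃ Fin m)
    {T : Tensor m n} (L : Matrix (Fin r) (Fin m₁ → Fin n) ℂ) (R : Matrix (Fin m₂ → Fin n) (Fin r) ℂ)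
    (hdet : (L * flatten σ T * R).det ≠ 0) (hT : T ∈ closure (cpSet m n q)) : r ≤ q := by
  by_contra! hlt
  have hcont : Continuous fun S : Tensor m n => (L * flatten σ S * R).det := by
    refine Continuous.matrix_det (Continuous.matrix_mul (Continuous.matrix_mul
      continuous_const ?_) continuous_const)
    exact continuous_matrix fun I J => continuous_apply _
  have hclosed : IsClosed {S : Tensor m n | (L * flatten σ S * R).det = 0} :=
    isClosed_singleton.preimage hcont
  refine hdet (closure_minimal (fun S hS => ?_) hclosed hT)
  by_contra hne
  have hrank := Matrix.rank_of_isUnit _ ((Matrix.isUnit_iff_isUnit_det _).mpr (Ne.isUnit hne))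
  have hle := ((Matrix.rank_mul_le_left (L * flatten σ S) R).trans
    (Matrix.rank_mul_le_right _ _)).trans (rank_flatten_le σ hS)
  rw [hrank, Fintype.card_fin] at hle
  omega

/-- Every value up to `N * m` is the sum of `m` digits in `{0, …, N}`. -/
lemma exists_fin_sum_eq (N m α : ℕ) (hα : α ≤ N * m) :
    ∃ I : Fin m → Fin (N + 1), ∑ j, (I j : ℕ) = α := by
  induction m generalizing α with
  | zero => exact ⟨Fin.elim0, by simp at hα ⊢; omega⟩
  | succ m ih =>
    rw [Nat.mul_succ] at hα
    obtain ⟨I, hI⟩ := ih (α - min α N) (by omega)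
    refine ⟨Fin.cons ⟨min α N, by omega⟩ I, ?_⟩
    rw [Fin.sum_univ_succ]
    simp only [Fin.cons_zero, Fin.cons_succ, hI]
    omega

/-- A product of Vandermonde entries depends only on the sum of the indices. -/
lemma prod_vand (N m : ℕ) (a b : ℂ) (I : Fin m → Fin (N + 1)) :
    ∏ j, vand (N + 1) a b (I j) =
      a ^ (N * m - ∑ j, (I j : ℕ)) * b ^ ∑ j, (I j : ℕ) := by
  simp only [vand, Finset.prod_mul_distrib, Finset.prod_pow_eq_pow_sum, Nat.add_sub_cancel]
  rw [Finset.sum_tsub_distrib _ fun j _ => Nat.le_of_lt_succ (I j).isLt]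
  simp [mul_comm]

/-- Vandermonde rank-one tensors of distinct projective points are linearly independent. -/
lemma linearIndependent_prod_vand {N m r : ℕ} (hr : r ≤ N * m + 1) {p : Fin r → ℂ × ℂ}
    (hne : ∀ k, p k ≠ 0)
    (hp : ∀ k l, k ≠ l → (p k).1 * (p l).2 - (p l).1 * (p k).2 ≠ 0) :
    LinearIndependent ℂ fun k (I : Fin m → Fin (N + 1)) =>
      ∏ j, vand (N + 1) (p k).1 (p k).2 (I j) := by
  rw [Fintype.linearIndependent_iff]
  intro c hc
  refine Fintype.linearIndependent_iff.mp (linearIndependent_vand hr hne hp) c ?_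
  ext α
  obtain ⟨I, hI⟩ := exists_fin_sum_eq N m α (Nat.le_of_lt_succ α.isLt)
  have := congrFun hc I
  simp only [Finset.sum_apply, Pi.smul_apply, prod_vand, hI] at this
  simpa [vand] using this

/-- A combination of `r` Vandermonde rank-one tensors of distinct projective points with nonzero
coefficients has border rank at least `r`. -/
lemma le_of_mem_closure_cpSet_of_vand {N m m₁ m₂ q r : ℕ} (σ : Fin m₁ ⊕ Fin m₂ ≃ Fin m)
    (hr₁ : r ≤ N * m₁ + 1) (hr₂ : r ≤ N * m₂ + 1) {p : Fin r → ℂ × ℂ} (hne : ∀ k, p k ≠ 0)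
    (hp : ∀ k l, k ≠ l → (p k).1 * (p l).2 - (p l).1 * (p k).2 ≠ 0)
    {c : Fin r → ℂ} (hc : ∀ k, c k ≠ 0) {T : Tensor m (N + 1)}
    (hT : ∀ i, T i = ∑ k, c k * ∏ j, vand (N + 1) (p k).1 (p k).2 (i j))
    (hcl : T ∈ closure (cpSet m (N + 1) q)) : r ≤ q := by
  obtain ⟨L, hL⟩ := exists_right_inverse_of_linearIndependent
    (linearIndependent_prod_vand hr₁ hne hp)
  obtain ⟨R, hR⟩ := exists_right_inverse_of_linearIndependent
    (linearIndependent_prod_vand hr₂ hne hp)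
  set A := Matrix.of fun k (I : Fin m₁ → Fin (N + 1)) =>
    ∏ j, vand (N + 1) (p k).1 (p k).2 (I j) with hA
  set B := Matrix.of fun k (J : Fin m₂ → Fin (N + 1)) =>
    ∏ j, vand (N + 1) (p k).1 (p k).2 (J j) with hB
  have hfac : flatten σ T = A.transpose * Matrix.diagonal c * B := by
    ext I J
    rw [Matrix.mul_apply, flatten, Matrix.of_apply, hT]
    refine Finset.sum_congr rfl fun k _ => ?_
    rw [Matrix.mul_diagonal, prod_sumElim σ fun _ => vand (N + 1) (p k).1 (p k).2]
    simp only [hA, hB, Matrix.transpose_apply, Matrix.of_apply]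
    ring
  refine le_of_mem_closure_cpSet σ L.transpose R ?_ hcl
  have hdiag : L.transpose * flatten σ T * R = Matrix.diagonal c := by
    rw [hfac, show L.transpose * (A.transpose * Matrix.diagonal c * B) * R =
      (A * L).transpose * Matrix.diagonal c * (B * R) by
        rw [Matrix.transpose_mul]; simp only [Matrix.mul_assoc], hL, hR]
    simp
  rw [hdiag, Matrix.det_diagonal]
  exact Finset.prod_ne_zero_iff.mpr fun k _ => hc k

lemma vandSet_subset_symSet (m n r : ℕ) : vandSet m n r ⊆ symSet m n r :=
  fun _ ⟨ab, h⟩ => ⟨fun k => vand n (ab k).1 (ab k).2, h⟩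

lemma symSet_subset_cpSet (m n r : ℕ) : symSet m n r ⊆ cpSet m n r :=
  fun _ ⟨v, h⟩ => ⟨fun k _ => v k, h⟩

/-- Over `ℂ`, coefficients of Vandermonde rank-one tensors can be absorbed into the points. -/
lemma mem_vandSet_of_eq_sum {N m r : ℕ} (hNm : N * m ≠ 0) {p : Fin r → ℂ × ℂ} {c : Fin r → ℂ}
    {T : Tensor m (N + 1)}
    (hT : ∀ i, T i = ∑ k, c k * ∏ j, vand (N + 1) (p k).1 (p k).2 (i j)) :
    T ∈ vandSet m (N + 1) r := by
  choose z hz using fun k => IsAlgClosed.exists_pow_nat_eq (c k) (Nat.pos_of_ne_zero hNm)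
  refine ⟨fun k => (z k * (p k).1, z k * (p k).2), fun i => ?_⟩
  rw [hT]
  refine Finset.sum_congr rfl fun k _ => ?_
  have hle : ∑ j, (i j : ℕ) ≤ N * m := by
    have := Finset.sum_le_card_nsmul Finset.univ (fun j => (i j : ℕ)) N
      fun j _ => Nat.le_of_lt_succ (i j).isLt
    simpa [mul_comm] using this
  rw [prod_vand, prod_vand, ← hz k]
  nth_rewrite 1 [← Nat.sub_add_cancel hle]
  rw [pow_add, mul_pow, mul_pow]
  ring

/-- Odd order `m = 2m₀+1`: if `r ≤ 1+(n-1)m₀` and the kernel form is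
squarefree, then all six ranks equal `r`. -/
theorem stmt_11 (n m₀ : ℕ) (hn : 2 ≤ n) (hm : 1 ≤ m₀)
    (H : Tensor (2 * m₀ + 1) n) (h : Fin ((n - 1) * (2 * m₀ + 1) + 1) → ℂ)
    (hH : IsHankel H h)
    (r : ℕ)
    (hr : r = (hMat ((n - 1) * (2 * m₀ + 1)) ((n - 1) * (2 * m₀ + 1) / 2) h).rank)
    (hrs : r ≤ 1 + (n - 1) * m₀)
    (f : Fin (r + 1) → ℂ) (hf0 : f ≠ 0)
    (hker : (hMat ((n - 1) * (2 * m₀ + 1)) r h).mulVec f = 0)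
    (hsf : Squarefree (binForm r f)) :
    vandRank H = r ∧ symRank H = r ∧ cpRank H = r ∧
      bVandRank H = r ∧ bSymRank H = r ∧ brank H = r := by
  obtain ⟨N, rfl⟩ : ∃ N, n = N + 1 := ⟨n - 1, by omega⟩
  simp only [Nat.add_sub_cancel] at h hH hr hrs hker
  have hN : 1 ≤ N := by omega
  have hsplit : N * (2 * m₀ + 1) = N * m₀ + N * m₀ + N := by ring
  have hrd : r ≤ N * (2 * m₀ + 1) := by
    have : 1 ≤ N * m₀ := Nat.mul_pos hN hm
    omega
  obtain ⟨p, hne, hp, hev⟩ := exists_roots_of_squarefree_binForm hsf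
  obtain ⟨c, rfl⟩ := exists_eq_sum_vand hrd hf0 hne hp hev hker
  have hc := coeff_ne_zero_of_rank_hMat (Nat.div_le_self _ 2) hr.le
  have hT : ∀ i, H i = ∑ k, c k * ∏ j, vand (N + 1) (p k).1 (p k).2 (i j) := fun i => by
    rw [hH i, Finset.sum_apply]
    refine Finset.sum_congr rfl fun k _ => ?_
    rw [prod_vand]
    rfl
  have hV : H ∈ vandSet (2 * m₀ + 1) (N + 1) r := mem_vandSet_of_eq_sum (by omega) hT
  have hlow : ∀ q, H ∈ closure (cpSet (2 * m₀ + 1) (N + 1) q) → r ≤ q := fun q hq =>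
    le_of_mem_closure_cpSet_of_vand (m₁ := m₀) (m₂ := m₀ + 1)
      (finSumFinEquiv.trans (finCongr (by omega))) (by omega)
      (by rw [Nat.mul_succ]; omega) hne hp hc hT hq
  have hVS := vandSet_subset_symSet (2 * m₀ + 1) (N + 1)
  have hSC := symSet_subset_cpSet (2 * m₀ + 1) (N + 1)
  have key : ∀ S : ℕ → Set (Tensor (2 * m₀ + 1) (N + 1)),
      vandSet (2 * m₀ + 1) (N + 1) r ⊆ S r →
      (∀ q, S q ⊆ closure (cpSet (2 * m₀ + 1) (N + 1) q)) → sInf {q | H ∈ S q} = r :=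
    fun S hmem hsub => IsLeast.csInf_eq ⟨hmem hV, fun q hq => hlow q (hsub q hq)⟩
  exact ⟨key _ subset_rfl fun q => ((hVS q).trans (hSC q)).trans subset_closure,
    key _ (hVS r) fun q => (hSC q).trans subset_closure,
    key _ ((hVS r).trans (hSC r)) fun q => subset_closure,
    key _ subset_closure fun q => closure_mono ((hVS q).trans (hSC q)),
    key _ ((hVS r).trans subset_closure) fun q => closure_mono (hSC q),
    key _ (((hVS r).trans (hSC r)).trans subset_closure) fun q => subset_rfl⟩
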